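/- Let A be a weak bialgebra with an antipode S such that the images ε_LR(A) and ε_RL(A) commute element-wise and S is anti-multiplicative. Then A is right-monoidal, i.e. a ε_LR(b) = ε_LR(a₍₁₎ b) a₍₂₎ for all a, b ∈ A. -/

import Mathlib

open TensorProduct

noncomputable section

variable (K A : Type*) [Field K] [Ring A] [Algebra K A] [Coalgebra K A]

/-- The linear map `a ↦ a ⊗ 1`. -/
def inclL : A →ₗ[K] A ⊗[K] A := (TensorProduct.mk K A A).flip 1

/-- The linear map `a ↦ 1 ⊗ a`. -/
def inclR : A →ₗ[K] A ⊗[K] A := TensorProduct.mk K A A 1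

/-- `ε_LL(a) = ε(a 1₍₁₎) 1₍₂₎`. -/
def eLL : A →ₗ[K] A :=
  (TensorProduct.lid K A).toLinearMap ∘ₗ
    LinearMap.rTensor A (Coalgebra.counit (R := K) (A := A)) ∘ₗ
    LinearMap.mulRight K (Coalgebra.comul (R := K) (1 : A)) ∘ₗ inclL K A

/-- `ε_RR(a) = 1₍₁₎ ε(1₍₂₎ a)`. -/
def eRR : A →ₗ[K] A :=
  (TensorProduct.rid K A).toLinearMap ∘ₗ
    LinearMap.lTensor A (Coalgebra.counit (R := K) (A := A)) ∘ₗ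
    LinearMap.mulLeft K (Coalgebra.comul (R := K) (1 : A)) ∘ₗ inclR K A

/-- `ε_LR(a) = ε(1₍₁₎ a) 1₍₂₎`. -/
def eLR : A →ₗ[K] A :=
  (TensorProduct.lid K A).toLinearMap ∘ₗ
    LinearMap.rTensor A (Coalgebra.counit (R := K) (A := A)) ∘ₗ
    LinearMap.mulLeft K (Coalgebra.comul (R := K) (1 : A)) ∘ₗ inclL K A

/-- `ε_RL(a) = 1₍₁₎ ε(a 1₍₂₎)`. -/
def eRL : A →ₗ[K] A :=
  (TensorProduct.rid K A).toLinearMap ∘ₗ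
    LinearMap.lTensor A (Coalgebra.counit (R := K) (A := A)) ∘ₗ
    LinearMap.mulRight K (Coalgebra.comul (R := K) (1 : A)) ∘ₗ inclR K A

/-- Convolution product: `(conv f g)(a) = f(a₍₁₎) g(a₍₂₎)` (implicit Sweedler sums). -/
def conv (f g : A →ₗ[K] A) : A →ₗ[K] A :=
  LinearMap.mul' K A ∘ₗ TensorProduct.map f g ∘ₗ Coalgebra.comul (R := K)

/-- Opposite convolution: `(copConv f g)(a) = f(a₍₂₎) g(a₍₁₎)`. -/
def copConv (f g : A →ₗ[K] A) : A →ₗ[K] A :=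
  LinearMap.mul' K A ∘ₗ TensorProduct.map f g ∘ₗ
    (TensorProduct.comm K A A).toLinearMap ∘ₗ Coalgebra.comul (R := K)

/-- `ε ⊗ ε` as a functional on `A ⊗ A`. -/
def pairCC : A ⊗[K] A →ₗ[K] K :=
  (TensorProduct.lid K K).toLinearMap ∘ₗ
    TensorProduct.map (Coalgebra.counit (R := K) (A := A)) (Coalgebra.counit (R := K) (A := A))

/-- `a ↦ ε(a)·1`. -/
def epsUnit : A →ₗ[K] A := Algebra.linearMap K A ∘ₗ Coalgebra.counit (R := K)

/-- `b ↦ (x ↦ ε(b x))`, i.e. the map `ε_L : A → Â`. -/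
def epsLfun : A →ₗ[K] A →ₗ[K] K :=
  LinearMap.llcomp K A A K (Coalgebra.counit (R := K) (A := A)) ∘ₗ LinearMap.mul K A

/-- The weak-bialgebra axiom: the coproduct is multiplicative. -/
def WeakBialg : Prop :=
  ∀ a b : A, Coalgebra.comul (R := K) (a * b) =
    Coalgebra.comul (R := K) a * Coalgebra.comul (R := K) b

/-- `ε(abc) = ε(a b₍₁₎) ε(b₍₂₎ c)` for all `a b c`. -/
def LeftMonoidal : Prop :=
  ∀ a b c : A, Coalgebra.counit (R := K) (a * b * c) =
    pairCC K A ((a ⊗ₜ[K] (1 : A)) * Coalgebra.comul (R := K) b * ((1 : A) ⊗ₜ[K] c))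

/-- `ε(abc) = ε(a b₍₂₎) ε(b₍₁₎ c)` for all `a b c`. -/
def RightMonoidal : Prop :=
  ∀ a b c : A, Coalgebra.counit (R := K) (a * b * c) =
    pairCC K A ((a ⊗ₜ[K] (1 : A)) *
      (TensorProduct.comm K A A (Coalgebra.comul (R := K) b)) * ((1 : A) ⊗ₜ[K] c))

/-- `(Δ(1) ⊗ 1)(1 ⊗ Δ(1)) = (Δ ⊗ id)(Δ(1))`. -/
def LeftComonoidal : Prop :=
  ((Coalgebra.comul (R := K) (1 : A)) ⊗ₜ[K] (1 : A)) *
      ((TensorProduct.assoc K A A A).symm ((1 : A) ⊗ₜ[K] Coalgebra.comul (R := K) (1 : A))) =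
    LinearMap.rTensor A (Coalgebra.comul (R := K)) (Coalgebra.comul (R := K) (1 : A))

/-- `(1 ⊗ Δ(1))(Δ(1) ⊗ 1) = (Δ ⊗ id)(Δ(1))`. -/
def RightComonoidal : Prop :=
  ((TensorProduct.assoc K A A A).symm ((1 : A) ⊗ₜ[K] Coalgebra.comul (R := K) (1 : A))) *
      ((Coalgebra.comul (R := K) (1 : A)) ⊗ₜ[K] (1 : A)) =
    LinearMap.rTensor A (Coalgebra.comul (R := K)) (Coalgebra.comul (R := K) (1 : A))

/-- `N_LL(A) = {a | Δ(a) = a 1₍₁₎ ⊗ 1₍₂₎}`. -/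
def NLL : Set A :=
  {a : A | Coalgebra.comul (R := K) a =
    (a ⊗ₜ[K] (1 : A)) * Coalgebra.comul (R := K) (1 : A)}

/-- `N_LR(A) = {a | Δ(a) = 1₍₁₎ a ⊗ 1₍₂₎}`. -/
def NLR : Set A :=
  {a : A | Coalgebra.comul (R := K) a =
    Coalgebra.comul (R := K) (1 : A) * (a ⊗ₜ[K] (1 : A))}

/-- `N_RL(A) = {a | Δ(a) = 1₍₁₎ ⊗ a 1₍₂₎}`. -/
def NRL : Set A :=
  {a : A | Coalgebra.comul (R := K) a =
    ((1 : A) ⊗ₜ[K] a) * Coalgebra.comul (R := K) (1 : A)}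

/-- `N_RR(A) = {a | Δ(a) = 1₍₁₎ ⊗ 1₍₂₎ a}`. -/
def NRR : Set A :=
  {a : A | Coalgebra.comul (R := K) a =
    Coalgebra.comul (R := K) (1 : A) * ((1 : A) ⊗ₜ[K] a)}

/-- A subset which is a unital subalgebra. -/
def IsUnitalSub (S : Set A) : Prop :=
  (1 : A) ∈ S ∧ (∀ x ∈ S, ∀ y ∈ S, x * y ∈ S) ∧ (∀ x ∈ S, ∀ y ∈ S, x + y ∈ S) ∧
    ∀ (k : K), ∀ x ∈ S, k • x ∈ S

/-- `A_L = {φ(1₍₁₎) 1₍₂₎ : φ ∈ Â}`. -/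
def ALset : Set A :=
  {x : A | ∃ φ : A →ₗ[K] K,
    x = (TensorProduct.lid K A) (LinearMap.rTensor A φ (Coalgebra.comul (R := K) (1 : A)))}

/-- `A_R = {φ(1₍₂₎) 1₍₁₎ : φ ∈ Â}`. -/
def ARset : Set A :=
  {x : A | ∃ φ : A →ₗ[K] K,
    x = (TensorProduct.rid K A) (LinearMap.lTensor A φ (Coalgebra.comul (R := K) (1 : A)))}

/- In Sweedler notation, antimultiplicativity of `S` turns `ε_LR(ab) = (ab)₍₁₎ S((ab)₍₂₎)` into
`a₍₁₎ ε_LR(b) S(a₍₂₎)`. Convolving with the identity on the right replaces `S(a₍₂₎)` by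
`ε_RL(a₍₂₎)`, past which `ε_LR(b)` commutes. Finally `a₍₁₎ ε_RL(a₍₂₎) = a`, which is the counit law
applied to `Δ(a) Δ(1) = Δ(a)`. -/

section

open scoped Coalgebra

variable {K A} {ι : Type*}

lemma conv_apply_eq_sum (f g : A →ₗ[K] A) {a : A} (r : Coalgebra.Repr K a ι) :
    conv K A f g a = ∑ i ∈ r.index, f (r.left i) * g (r.right i) :=
  r.convMul_apply (.toConv f) (.toConv g)

lemma eRL_apply_eq_sum (r : Coalgebra.Repr K (1 : A) ι) (a : A) :
    eRL K A a =
      ∑ i ∈ r.index, Coalgebra.counit (R := K) (a * r.right i) • r.left i := by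
  simp [eRL, inclR, ← r.eq, Finset.mul_sum]

lemma conv_assoc (f g h : A →ₗ[K] A) :
    conv K A (conv K A f g) h = conv K A f (conv K A g h) :=
  congrArg WithConv.ofConv (mul_assoc (WithConv.toConv f) (.toConv g) (.toConv h))

lemma conv_mulRight_comp_of_commute {e : A} (f : A →ₗ[K] A) {g : A →ₗ[K] A}
    (h : ∀ a, Commute e (g a)) :
    conv K A (LinearMap.mulRight K e ∘ₗ f) g = LinearMap.mulRight K e ∘ₗ conv K A f g := by
  ext a
  simp [conv_apply_eq_sum _ _ (ℛ K a), mul_assoc, (h _).eq]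

lemma WeakBialg.conv_comp_mulRight (hΔ : WeakBialg K A) {f g : A →ₗ[K] A}
    (hf : ∀ a b, f (a * b) = f a * f b) (hg : ∀ a b, g (a * b) = g b * g a) (b : A) :
    conv K A f g ∘ₗ LinearMap.mulRight K b =
      conv K A (LinearMap.mulRight K (conv K A f g b) ∘ₗ f) g := by
  ext a
  let r := ℛ K a
  let s := ℛ K b
  calc
    conv K A f g (a * b)
        = ∑ i ∈ r.index, ∑ j ∈ s.index,
            f (r.left i * s.left j) * g (r.right i * s.right j) := by
      simp [conv, hΔ a b, ← r.eq, ← s.eq, Finset.sum_mul_sum]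
    _ = ∑ i ∈ r.index,
          f (r.left i) * (∑ j ∈ s.index, f (s.left j) * g (s.right j)) * g (r.right i) := by
      simp only [hf, hg, Finset.mul_sum, Finset.sum_mul, mul_assoc]
    _ = conv K A (LinearMap.mulRight K (conv K A f g b) ∘ₗ f) g a := by
      simp [conv_apply_eq_sum _ _ r, conv_apply_eq_sum _ _ s]

lemma WeakBialg.conv_id_eRL (hΔ : WeakBialg K A) :
    conv K A LinearMap.id (eRL K A) = LinearMap.id := by
  ext a
  let r := ℛ K a
  let s := ℛ K (1 : A)
  calc
    conv K A LinearMap.id (eRL K A) a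
        = ∑ i ∈ r.index, ∑ j ∈ s.index,
            Coalgebra.counit (R := K) (r.right i * s.right j) • (r.left i * s.left j) := by
      simp [conv_apply_eq_sum _ _ r, eRL_apply_eq_sum s, Finset.mul_sum]
    _ = TensorProduct.rid K A (LinearMap.lTensor A Coalgebra.counit
          (Coalgebra.comul (R := K) a * Coalgebra.comul (R := K) (1 : A))) := by
      simp [← r.eq, ← s.eq, Finset.sum_mul_sum]
    _ = a := by
      rw [← hΔ, mul_one, Coalgebra.lTensor_counit_comul, TensorProduct.rid_tmul, one_smul]

end

theorem stmt18_general (hΔ : WeakBialg K A) (S : A →ₗ[K] A)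
    (hpre1 : conv K A LinearMap.id S = eLR K A)
    (hpre2 : conv K A S LinearMap.id = eRL K A)
    (hcomm : ∀ a b : A, eLR K A a * eRL K A b = eRL K A b * eLR K A a)
    (hanti : ∀ a b : A, S (a * b) = S b * S a) (a b : A) :
    a * eLR K A b =
      conv K A (eLR K A ∘ₗ LinearMap.mulRight K b) LinearMap.id a := by
  let ρ := LinearMap.mulRight K (eLR K A b)
  have hLR : eLR K A ∘ₗ LinearMap.mulRight K b = conv K A ρ S := by
    simpa [hpre1] using hΔ.conv_comp_mulRight (f := LinearMap.id) (fun _ _ ↦ rfl) hanti b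
  have hRL : conv K A ρ (eRL K A) = ρ := by
    simpa [hΔ.conv_id_eRL] using conv_mulRight_comp_of_commute LinearMap.id (hcomm b)
  calc
    a * eLR K A b = conv K A ρ (eRL K A) a := by rw [hRL]; rfl
    _ = conv K A (conv K A ρ S) LinearMap.id a := by rw [conv_assoc, hpre2]
    _ = conv K A (eLR K A ∘ₗ LinearMap.mulRight K b) LinearMap.id a := by rw [hLR]

/-- if `S` is an anti-multiplicative antipode and `ε_LR(A)` commutes
with `ε_RL(A)`, then `A` is right-monoidal: `a ε_LR(b) = ε_LR(a₍₁₎ b) a₍₂₎`. -/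
theorem stmt18 [FiniteDimensional K A] (hΔ : WeakBialg K A) (S : A →ₗ[K] A)
    (hpre1 : conv K A LinearMap.id S = eLR K A)
    (hpre2 : conv K A S LinearMap.id = eRL K A)
    (hant : conv K A (conv K A S LinearMap.id) S = S)
    (hcomm : ∀ a b : A, eLR K A a * eRL K A b = eRL K A b * eLR K A a)
    (hanti : ∀ a b : A, S (a * b) = S b * S a) :
    ∀ a b : A, a * eLR K A b =
      conv K A (eLR K A ∘ₗ LinearMap.mulRight K b) LinearMap.id a :=
  stmt18_general K A hΔ S hpre1 hpre2 hcomm hanti
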